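/- Let t, r, k, k' be finite types, let G : Matrix t r ℝ, let U : Matrix t k ℝ satisfy Uᵀ · U = 1, and let V̂ : Matrix k k' ℝ be arbitrary. Set V := U · V̂. Then the squared Frobenius approximation errors decompose orthogonally: ‖G − V · Vᵀ · G‖_F² = ‖G − U · Uᵀ · G‖_F² + ‖Uᵀ·G − V̂ · V̂ᵀ · (Uᵀ·G)‖_F². -/

import Mathlib

open Matrix

/-- The Frobenius norm of a real matrix: `(Σᵢⱼ M i j ^ 2)^{1/2}`. -/
noncomputable def frobNorm {m n : Type*} [Fintype m] [Fintype n]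
    (M : Matrix m n ℝ) : ℝ :=
  Real.sqrt (∑ i, ∑ j, (M i j) ^ 2)

/-!
For isometric `U`, the residual `G - U * Uᵀ * G` is Frobenius-orthogonal to every matrix of the
form `U * B`, and left multiplication by `U` preserves the Frobenius norm. Hence, for any
coefficient matrix `W`, splitting `G - U * W = (G - U * Uᵀ * G) + U * (Uᵀ * G - W)` and applying
Pythagoras decomposes the error of approximating `G` by `U * W`; the theorem is the case
`W = Vhat * Vhatᵀ * (Uᵀ * G)`.
-/

section FrobeniusNorm

variable {m n k : Type*} [Fintype m] [Fintype n] [Fintype k]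

theorem frobNorm_sq_eq_trace (M : Matrix m n ℝ) : frobNorm M ^ 2 = (Mᵀ * M).trace := by
  rw [frobNorm, Real.sq_sqrt (by positivity), Finset.sum_comm]
  simp only [trace, diag_apply, mul_apply, transpose_apply, sq]

theorem frobNorm_add_sq_of_trace_eq_zero {A B : Matrix m n ℝ} (h : (Aᵀ * B).trace = 0) :
    frobNorm (A + B) ^ 2 = frobNorm A ^ 2 + frobNorm B ^ 2 := by
  have h_symm : (Bᵀ * A).trace = 0 := by
    rw [← trace_transpose, transpose_mul, transpose_transpose, h]
  simp only [frobNorm_sq_eq_trace, transpose_add, Matrix.add_mul, Matrix.mul_add, trace_add, h,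
    h_symm, add_zero, zero_add]

theorem frobNorm_mul_of_transpose_mul_self_eq_one [DecidableEq k] {U : Matrix m k ℝ}
    (hU : Uᵀ * U = 1) (B : Matrix k n ℝ) : frobNorm (U * B) = frobNorm B := by
  have h_gram : (U * B)ᵀ * (U * B) = Bᵀ * B := by
    rw [transpose_mul, Matrix.mul_assoc, ← Matrix.mul_assoc Uᵀ, hU, Matrix.one_mul]
  have h_sq : frobNorm (U * B) ^ 2 = frobNorm B ^ 2 := by
    rw [frobNorm_sq_eq_trace, frobNorm_sq_eq_trace, h_gram]
  exact (sq_eq_sq₀ (Real.sqrt_nonneg _) (Real.sqrt_nonneg _)).mp h_sq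

end FrobeniusNorm

theorem mul_sub_mul_mul_eq_zero_of_mul_eq_one {R m n k : Type*} [Ring R] [Fintype m] [Fintype k]
    [DecidableEq k] {L : Matrix k m R} {U : Matrix m k R} (hLU : L * U = 1) (G : Matrix m n R) :
    L * (G - U * L * G) = 0 := by
  rw [Matrix.mul_sub, ← Matrix.mul_assoc, ← Matrix.mul_assoc, hLU, Matrix.one_mul, sub_self]

theorem error_decomposition_general {t r k : Type*} [Fintype t] [Fintype r] [Fintype k]
    [DecidableEq k] (G : Matrix t r ℝ) (U : Matrix t k ℝ) (hU : Uᵀ * U = 1) (W : Matrix k r ℝ) :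
    frobNorm (G - U * W) ^ 2 = frobNorm (G - U * Uᵀ * G) ^ 2 + frobNorm (Uᵀ * G - W) ^ 2 := by
  have h_split : G - U * W = (G - U * Uᵀ * G) + U * (Uᵀ * G - W) := by
    rw [Matrix.mul_sub, ← Matrix.mul_assoc, sub_add_sub_cancel]
  have h_orth : ((G - U * Uᵀ * G)ᵀ * (U * (Uᵀ * G - W))).trace = 0 := by
    have h_residual : (G - U * Uᵀ * G)ᵀ * U = 0 := by
      simpa only [transpose_mul, transpose_transpose, transpose_zero] using
        congrArg transpose (mul_sub_mul_mul_eq_zero_of_mul_eq_one hU G)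
    rw [← Matrix.mul_assoc, h_residual, Matrix.zero_mul, trace_zero]
  rw [h_split, frobNorm_add_sq_of_trace_eq_zero h_orth,
    frobNorm_mul_of_transpose_mul_self_eq_one hU]

theorem error_decomposition
    {t r k k' : Type*} [Fintype t] [Fintype r] [Fintype k] [Fintype k']
    [DecidableEq k]
    (G : Matrix t r ℝ) (U : Matrix t k ℝ) (hU : Uᵀ * U = 1)
    (Vhat : Matrix k k' ℝ) :
    frobNorm (G - (U * Vhat) * (U * Vhat)ᵀ * G) ^ 2 =
      frobNorm (G - U * Uᵀ * G) ^ 2 +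
      frobNorm (Uᵀ * G - Vhat * Vhatᵀ * (Uᵀ * G)) ^ 2 := by
  simpa only [transpose_mul, Matrix.mul_assoc] using
    error_decomposition_general G U hU (Vhat * Vhatᵀ * (Uᵀ * G))
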